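/- arXiv:2105.03932 — 6 statements merged into one kernel-verified Lean document; each statement's English description precedes it below -/
import Mathlib

section
/- Let n ≥ 1, let S be a nonempty finite set of nonzero vectors in (Fin n → ZMod 2), and let (v_r)_{r ∈ S} be unit vectors in EuclideanSpace ℝ (Fin 3). Then ∑_{x ∈ (Fin n → ZMod 2)} ‖∑_{r ∈ S} (-1)^{f_r(x)} • v_r‖ ≤ 2^n · √|S|. -/
/-!
Distinct characters `x ↦ (-1)^{r ⬝ x}` of `(ZMod 2)^n` are orthogonal, so expanding the squared norm
and summing over `x` kills all cross terms (`sum_sign_mul_sign`), and the mean over `x` of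
`‖∑ r ∈ S, (-1)^{r ⬝ x} • v r‖ ^ 2` is `∑ r ∈ S, ‖v r‖ ^ 2 = |S|` (`sum_norm_sq_signed_sum`).
The bound on the mean of the norm itself is then the Cauchy–Schwarz inequality.
-/

theorem neg_one_pow_val_add (a b : ZMod 2) :
    (-1 : ℝ) ^ ZMod.val (a + b) = (-1 : ℝ) ^ ZMod.val a * (-1 : ℝ) ^ ZMod.val b := by
  rw [ZMod.val_add, ← neg_one_pow_eq_pow_mod_two, pow_add]

theorem neg_one_pow_val_mul_self (a : ZMod 2) : (-1 : ℝ) ^ ZMod.val a * (-1 : ℝ) ^ ZMod.val a = 1 := by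
  rw [← mul_pow]; norm_num

/-- A nontrivial character of `(ZMod 2)^n` sums to zero: translating by a basis vector on which the
character is `-1` negates the sum. -/
theorem sum_sign_eq_zero {n : ℕ} {t : Fin n → ZMod 2} (ht : t ≠ 0) :
    ∑ x : Fin n → ZMod 2, (-1 : ℝ) ^ ZMod.val (∑ k, t k * x k) = 0 := by
  obtain ⟨j, hj⟩ := Function.ne_iff.mp ht
  have hj1 : t j = 1 := by
    have : ∀ a : ZMod 2, a ≠ 0 → a = 1 := by decide
    exact this _ hj
  have h := Equiv.sum_comp (Equiv.addRight (Pi.single j (1 : ZMod 2)))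
    (fun x : Fin n → ZMod 2 => (-1 : ℝ) ^ ZMod.val (∑ k, t k * x k))
  have hshift : ∀ x : Fin n → ZMod 2,
      (-1 : ℝ) ^ ZMod.val (∑ k, t k * (Equiv.addRight (Pi.single j (1 : ZMod 2)) x) k)
        = -(-1 : ℝ) ^ ZMod.val (∑ k, t k * x k) := by
    intro x
    have : ∑ k, t k * (Equiv.addRight (Pi.single j (1 : ZMod 2)) x) k
        = ∑ k, t k * x k + 1 := by
      simp [mul_add, Finset.sum_add_distrib, Pi.single_apply, hj1]
    rw [this, neg_one_pow_val_add, ZMod.val_one]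
    ring
  simp only [hshift, Finset.sum_neg_distrib] at h
  linarith

/-- Orthogonality relations for the characters of `(ZMod 2)^n`. -/
theorem sum_sign_mul_sign {n : ℕ} (r s : Fin n → ZMod 2) :
    ∑ x : Fin n → ZMod 2,
      (-1 : ℝ) ^ ZMod.val (∑ k, r k * x k) * (-1 : ℝ) ^ ZMod.val (∑ k, s k * x k)
      = if r = s then 2 ^ n else 0 := by
  split_ifs with h
  · subst h
    simp [neg_one_pow_val_mul_self]
  · have hrs : r + s ≠ 0 := by
      intro h0
      apply h
      rw [eq_neg_of_add_eq_zero_left h0]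
      funext k
      exact ZMod.neg_eq_self_mod_two _
    rw [← sum_sign_eq_zero hrs]
    refine Finset.sum_congr rfl fun x _ => ?_
    rw [← neg_one_pow_val_add, ← Finset.sum_add_distrib]
    simp [add_mul]

/-- Parseval's identity for vector-valued functions on `(ZMod 2)^n`. -/
theorem sum_norm_sq_signed_sum {n : ℕ} {E : Type*} [NormedAddCommGroup E] [InnerProductSpace ℝ E]
    (S : Finset (Fin n → ZMod 2)) (v : (Fin n → ZMod 2) → E) :
    ∑ x : Fin n → ZMod 2, ‖∑ r ∈ S, ((-1 : ℝ) ^ ZMod.val (∑ k, r k * x k)) • v r‖ ^ 2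
      = 2 ^ n * ∑ r ∈ S, ‖v r‖ ^ 2 := by
  simp only [← real_inner_self_eq_norm_sq, sum_inner, inner_sum, real_inner_smul_left,
    real_inner_smul_right, ← mul_assoc]
  rw [Finset.sum_comm, Finset.mul_sum]
  refine Finset.sum_congr rfl fun r hr => ?_
  rw [Finset.sum_comm]
  simp only [← Finset.sum_mul, sum_sign_mul_sign]
  simp [hr]

/-- For `n ≥ 1`, a nonempty finite set `S` of nonzero vectors in `Fin n → ZMod 2` and
unit vectors `v r` in `EuclideanSpace ℝ (Fin 3)` for `r ∈ S`,
`∑ x, ‖∑ r ∈ S, (-1)^{f_r x} • v r‖ ≤ 2^n * √|S|`. -/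
theorem sum_norm_signed_sum_le (n : ℕ) (hn : 1 ≤ n)
    (S : Finset (Fin n → ZMod 2)) (hS : S.Nonempty) (hS0 : ∀ r ∈ S, r ≠ 0)
    (v : (Fin n → ZMod 2) → EuclideanSpace ℝ (Fin 3)) (hv : ∀ r ∈ S, ‖v r‖ = 1) :
    ∑ x : Fin n → ZMod 2,
      ‖∑ r ∈ S, ((-1 : ℝ) ^ ZMod.val (∑ k, r k * x k)) • v r‖
      ≤ 2 ^ n * Real.sqrt (S.card : ℝ) := by
  refine le_of_abs_le (abs_le_of_sq_le_sq ?_ (by positivity))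
  have hcard : ∑ r ∈ S, ‖v r‖ ^ 2 = (S.card : ℝ) := by
    rw [Finset.sum_congr rfl fun r hr => by rw [hv r hr, one_pow]]
    simp
  refine sq_sum_le_card_mul_sum_sq.trans (le_of_eq ?_)
  rw [sum_norm_sq_signed_sum, hcard, mul_pow, Real.sq_sqrt (Nat.cast_nonneg _)]
  simp [Finset.card_univ]
  ring
end

section
/- (Theorem 1, classical case) Let n ≥ 1 and let S be a finite set of nonzero vectors in (Fin n → ZMod 2) with m = |S| ≥ 1. Then the maximal classical success probability of the (n,S) GRAC is at least the maximal classical success probability of the (m → 1) random access code; that is, max over encodings E : (Fin n → ZMod 2) → ZMod 2 and decodings D : S × ZMod 2 → ZMod 2 of (1/(2^n·m)) · ∑_{x} ∑_{r ∈ S} (1 if D(r, E(x)) = f_r(x) else 0) is at least max over encodings E' : (Fin m → ZMod 2) → ZMod 2 and decodings D' : Fin m × ZMod 2 → ZMod 2 of (1/(2^m·m)) · ∑_{x̃ ∈ (Fin m → ZMod 2)} ∑_{i ∈ Fin m} (1 if D'(i, E'(x̃)) = x̃ i else 0). -/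
/-!
A random access code can be made insensitive to the distribution of its input by shared randomness:
shift the input by a uniform mask `s`, encode, and let the receiver add `s i` back to the decoded
bit. Fed with the (generally correlated) bits `(f_r(x))_{r ∈ S}`, the masked input is uniform on
`Fin m → ZMod 2` for every fixed `x`, so the success probability averaged over `s` is exactly that
of the original code (`sum_masked_success`). Some fixed mask does at least as well as the average
(`exists_good_mask`), and fixing it gives a deterministic GRAC protocol.
-/

/-- Summed over all masks `s`, the number of correctly decoded bits of the masked code on a fixed
input `y` is the total number of correctly decoded bits of the original code. -/
lemma sum_masked_success {m : ℕ} (E' : (Fin m → ZMod 2) → ZMod 2)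
    (D' : Fin m → ZMod 2 → ZMod 2) (y : Fin m → ZMod 2) :
    ∑ s : Fin m → ZMod 2, ∑ i : Fin m,
        (if D' i (E' (y + s)) + s i = y i then (1 : ℝ) else 0)
      = ∑ x' : Fin m → ZMod 2, ∑ i : Fin m, (if D' i (E' x') = x' i then (1 : ℝ) else 0) := by
  refine Fintype.sum_equiv (Equiv.addLeft y) _ _ fun s => Finset.sum_congr rfl fun i _ => ?_
  -- over `ZMod 2`, adding `s i` is the same as subtracting it
  have key : ∀ a b c : ZMod 2, a + b = c ↔ a = c + b := by decide
  exact if_congr (key _ _ _) rfl rfl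

/-- For any (possibly non-uniform) family `L x` of inputs, some fixed mask makes the masked code
at least as successful as the original code is on uniform inputs. -/
lemma exists_good_mask {m : ℕ} {X : Type*} [Fintype X] (L : X → Fin m → ZMod 2)
    (E' : (Fin m → ZMod 2) → ZMod 2) (D' : Fin m → ZMod 2 → ZMod 2) :
    ∃ s : Fin m → ZMod 2,
      (Fintype.card X : ℝ) / 2 ^ m *
          ∑ x' : Fin m → ZMod 2, ∑ i : Fin m, (if D' i (E' x') = x' i then (1 : ℝ) else 0)
        ≤ ∑ x : X, ∑ i : Fin m,
          (if D' i (E' (L x + s)) + s i = L x i then (1 : ℝ) else 0) := by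
  obtain ⟨s, -, hs⟩ := Finset.exists_le_of_sum_le (s := Finset.univ)
    (f := fun _ : Fin m → ZMod 2 => (Fintype.card X : ℝ) / 2 ^ m *
      ∑ x' : Fin m → ZMod 2, ∑ i : Fin m, (if D' i (E' x') = x' i then (1 : ℝ) else 0))
    (g := fun s => ∑ x : X, ∑ i : Fin m,
      (if D' i (E' (L x + s)) + s i = L x i then (1 : ℝ) else 0))
    Finset.univ_nonempty (by
      conv_rhs => rw [Finset.sum_comm]
      simp only [sum_masked_success, Finset.sum_const, Finset.card_univ, Fintype.card_pi,
        ZMod.card, Finset.prod_const, Fintype.card_fin, nsmul_eq_mul]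
      push_cast
      apply le_of_eq
      field_simp)
  exact ⟨s, hs⟩


/-- (Theorem 1, classical case) For `n ≥ 1` and a finite set `S` of nonzero vectors in
`Fin n → ZMod 2` with `m = |S| ≥ 1`, the maximal classical success probability of the
`(n,S)` GRAC (maximized over deterministic one-bit encodings `E` and decodings `D`) is at
least the maximal classical success probability of the `(m → 1)` random access code. -/
theorem grac_classical_ge_rac (n : ℕ) (hn : 1 ≤ n)
    (S : Finset (Fin n → ZMod 2)) (hS0 : ∀ r ∈ S, r ≠ 0)
    (m : ℕ) (hm : m = S.card) (hm1 : 1 ≤ m) :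
    (⨆ E : (Fin n → ZMod 2) → ZMod 2, ⨆ D : (Fin n → ZMod 2) → ZMod 2 → ZMod 2,
      (1 / ((2 : ℝ) ^ n * (m : ℝ))) *
        ∑ x : Fin n → ZMod 2, ∑ r ∈ S,
          (if D r (E x) = ∑ k, r k * x k then (1 : ℝ) else 0))
    ≥ ⨆ E' : (Fin m → ZMod 2) → ZMod 2, ⨆ D' : Fin m → ZMod 2 → ZMod 2,
      (1 / ((2 : ℝ) ^ m * (m : ℝ))) *
        ∑ x' : Fin m → ZMod 2, ∑ i : Fin m,
          (if D' i (E' x') = x' i then (1 : ℝ) else 0) := by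
  have hm0 : (0 : ℝ) < m := by exact_mod_cast hm1
  refine ciSup_le fun E' => ciSup_le fun D' => ?_
  let e : S ≃ Fin m := S.equivFinOfCardEq hm.symm
  -- the position of `r` in `S`, with an irrelevant default outside `S`
  let idx : (Fin n → ZMod 2) → Fin m := fun r => if h : r ∈ S then e ⟨r, h⟩ else ⟨0, hm1⟩
  let L : (Fin n → ZMod 2) → Fin m → ZMod 2 := fun x i => ∑ k, (e.symm i).1 k * x k
  obtain ⟨s, hs⟩ := exists_good_mask L E' D'
  refine le_ciSup_of_le (Set.finite_range _).bddAbove (fun x => E' (L x + s)) ?_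
  refine le_ciSup_of_le (Set.finite_range _).bddAbove (fun r b => D' (idx r) b + s (idx r)) ?_
  have hsum : ∀ x : Fin n → ZMod 2,
      ∑ r ∈ S, (if D' (idx r) (E' (L x + s)) + s (idx r) = ∑ k, r k * x k then (1 : ℝ) else 0)
        = ∑ i : Fin m, (if D' i (E' (L x + s)) + s i = L x i then (1 : ℝ) else 0) := by
    intro x
    rw [← Finset.sum_coe_sort]
    refine Fintype.sum_equiv e _ _ fun r => ?_
    have hidx : idx r = e r := by simp [idx]
    simp only [hidx, L, Equiv.symm_apply_apply]
  simp only [hsum]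
  refine le_trans (le_of_eq ?_) (mul_le_mul_of_nonneg_left hs (by positivity))
  simp only [Fintype.card_pi, ZMod.card, Finset.prod_const, Finset.card_univ, Fintype.card_fin]
  push_cast
  field_simp
end

section
/- (Observation 1) Let n = 3 and let R(3) be the set of all 7 nonzero vectors in (Fin 3 → ZMod 2). Let E_maj : (Fin 3 → ZMod 2) → ZMod 2 be the majority encoding, E_maj(x) = 1 iff at least two of x 0, x 1, x 2 equal 1. Then for every decoding D : R(3) × ZMod 2 → ZMod 2, the classical success probability (1/(2^3·7)) · ∑_{x} ∑_{r ∈ R(3)} (1 if D(r, E_maj(x)) = f_r(x) else 0) is at most 36/56, which is strictly less than the maximal classical success probability 37/56 of the (3, R(3)) GRAC. Hence majority encoding with identity decoding is not optimal for the (3, R(3)) GRAC. -/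
/-!
Fourier analysis on `𝔽₂³`. For an encoding `E` let `N` be the number of inputs sent to `1`
and let `W r = ∑_{E x = 1} (-1)^(r · x)`. For `r ≠ 0` any decoding of `f_r` is correct on at most
`4 + |W r|` of the eight inputs (`score_le`), so at most `28 + ∑_{r ≠ 0} |W r|` of the 56 pairs
are decoded correctly. Parseval gives `∑_{r ≠ 0} (W r)² = 8 N - N²` (`parseval`), and every `W r`
has the parity of `N`.

* For even `N`, `2 |W| ≤ W²` gives `∑ |W r| ≤ (16 - (N - 4)²) / 2 ≤ 8`, hence a total of at
  most 36. Majority is balanced (`N = 4`), so it falls in this case.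
* For odd `N`, `4 |W| ≤ W² + 3` gives `4 ∑ |W r| ≤ 16 - (N - 4)² + 21 ≤ 36`, hence a total of at
  most 37. This is attained by the indicator of three points `0, e₀, e₁`.
-/

namespace GRAC

/-- The input space `𝔽₂³`; parity masks `r` live in the same space. -/
abbrev V := Fin 3 → ZMod 2

/-- The sign `(-1)^b`, as an integer. -/
def sgn (b : ZMod 2) : ℤ := if b = 0 then 1 else -1

/-- The character `(-1)^(r · x)`. -/
def chi (r x : V) : ℤ := sgn (∑ k, r k * x k)

/-- The bit `b` read as the integer `0` or `1`. -/
def bit (b : ZMod 2) : ℤ := if b = 1 then 1 else 0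

/-- The unnormalised Fourier coefficient at `r` of the indicator of `{x | E x = 1}`. -/
def W (E : V → ZMod 2) (r : V) : ℤ := ∑ x, bit (E x) * chi r x

/-- The number of inputs mapped to `1`. -/
def ones (E : V → ZMod 2) : ℤ := ∑ x, bit (E x)

/-- The number of pairs `(x, r)`, `r ≠ 0`, that are decoded correctly. -/
def score (E : V → ZMod 2) (D : V → ZMod 2 → ZMod 2) : ℤ :=
  ∑ x : V, ∑ r ∈ Finset.univ.filter (fun r : V => r ≠ 0),
    (if D r (E x) = ∑ k, r k * x k then (1 : ℤ) else 0)

lemma sum_chi_eq_zero : ∀ r : V, r ≠ 0 → ∑ x, chi r x = 0 := by decide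

lemma chi_orthogonal : ∀ x y : V, ∑ r, chi r x * chi r y = if x = y then 8 else 0 := by decide

lemma two_mul_indicator : ∀ a b : ZMod 2,
    2 * (if a = b then (1 : ℤ) else 0) = 1 + sgn a * sgn b := by decide

lemma sgn_interpolate : ∀ a b e : ZMod 2, ∀ d : ZMod 2 → ZMod 2, d 0 = a → d 1 = b →
    sgn (d e) = sgn a + (sgn b - sgn a) * bit e := by decide

lemma sgn_cases : ∀ a : ZMod 2, sgn a = 1 ∨ sgn a = -1 := by decide

lemma bit_mul_self : ∀ a : ZMod 2, bit a * bit a = bit a := by decide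

/-- A decoder sees only one bit, so its advantage on the parity `f_r` is governed by the
correlation `W E r`; the two message classes contribute opposite character sums. -/
lemma score_le (E : V → ZMod 2) (d : ZMod 2 → ZMod 2) (r : V) (hr : r ≠ 0) :
    ∑ x : V, (if d (E x) = ∑ k, r k * x k then (1 : ℤ) else 0) ≤ 4 + |W E r| := by
  have h : 2 * ∑ x : V, (if d (E x) = ∑ k, r k * x k then (1 : ℤ) else 0)
      = 8 + (sgn (d 1) - sgn (d 0)) * W E r := by
    have h1 : ∀ x : V, 2 * (if d (E x) = ∑ k, r k * x k then (1 : ℤ) else 0)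
        = 1 + sgn (d 0) * chi r x + (sgn (d 1) - sgn (d 0)) * (bit (E x) * chi r x) := by
      intro x
      rw [two_mul_indicator, sgn_interpolate _ _ (E x) d rfl rfl]
      unfold chi
      ring
    rw [Finset.mul_sum, Finset.sum_congr rfl (fun x _ => h1 x), Finset.sum_add_distrib,
      Finset.sum_add_distrib, ← Finset.mul_sum, ← Finset.mul_sum, sum_chi_eq_zero r hr, W]
    simp
  have h2 := le_abs_self (W E r)
  have h3 := neg_abs_le (W E r)
  rcases sgn_cases (d 0) with h0 | h0 <;> rcases sgn_cases (d 1) with h1 | h1 <;>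
    rw [h0, h1] at h <;> linarith

lemma W_zero (E : V → ZMod 2) : W E 0 = ones E := by
  simp [W, ones, chi, sgn]

/-- Parseval's identity with the trivial character split off. -/
lemma parseval (E : V → ZMod 2) :
    ∑ r ∈ Finset.univ.filter (fun r : V => r ≠ 0), W E r ^ 2 = 8 * ones E - ones E ^ 2 := by
  have h : ∑ r, W E r ^ 2 = 8 * ones E := by
    calc ∑ r, W E r ^ 2
        = ∑ r, ∑ x, ∑ y, (bit (E x) * bit (E y)) * (chi r x * chi r y) := by
          refine Finset.sum_congr rfl fun r _ => ?_
          rw [sq, W, Finset.sum_mul_sum]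
          refine Finset.sum_congr rfl fun x _ => Finset.sum_congr rfl fun y _ => by ring
      _ = ∑ x, ∑ y, (bit (E x) * bit (E y)) * ∑ r, chi r x * chi r y := by
          rw [Finset.sum_comm]
          refine Finset.sum_congr rfl fun x _ => ?_
          rw [Finset.sum_comm]
          simp_rw [Finset.mul_sum]
      _ = 8 * ones E := by
          simp only [chi_orthogonal, mul_ite, mul_zero, Finset.sum_ite_eq, Finset.mem_univ,
            if_true, bit_mul_self]
          rw [← Finset.sum_mul, ones, mul_comm]
  rw [Finset.filter_ne', ← h, ← Finset.add_sum_erase _ _ (Finset.mem_univ (0 : V)), W_zero]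
  ring

lemma W_parity (E : V → ZMod 2) (r : V) : (2 : ℤ) ∣ W E r - ones E := by
  rw [W, ones, ← Finset.sum_sub_distrib]
  refine Finset.dvd_sum fun x _ => ?_
  rcases sgn_cases (∑ k, r k * x k) with h | h
  · simp [chi, h]
  · exact ⟨-bit (E x), by rw [chi, h]; ring⟩

lemma card_masks : (Finset.univ.filter (fun r : V => r ≠ 0)).card = 7 := by decide

lemma score_le_sum (E : V → ZMod 2) (D : V → ZMod 2 → ZMod 2) :
    score E D ≤ 28 + ∑ r ∈ Finset.univ.filter (fun r : V => r ≠ 0), |W E r| := by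
  rw [score, Finset.sum_comm]
  refine (Finset.sum_le_sum fun r hr =>
    score_le E (D r) r (Finset.mem_filter.mp hr).2).trans_eq ?_
  rw [Finset.sum_add_distrib, Finset.sum_const, card_masks]
  norm_num

lemma score_le_of_even (E : V → ZMod 2) (D : V → ZMod 2 → ZMod 2) (hE : (2 : ℤ) ∣ ones E) :
    score E D ≤ 36 := by
  have h : ∀ r : V, 2 * |W E r| ≤ W E r ^ 2 := by
    intro r
    have h1 : (2 : ℤ) ∣ |W E r| := by
      rw [dvd_abs]
      exact (dvd_iff_dvd_of_dvd_sub (W_parity E r)).mpr hE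
    obtain ⟨k, hk⟩ := h1
    have hk0 : 0 ≤ k := by have := abs_nonneg (W E r); omega
    rw [← sq_abs, hk]
    rcases hk0.eq_or_lt with h0 | h0
    · simp [← h0]
    · nlinarith
  have h2 := Finset.sum_le_sum fun r (_ : r ∈ Finset.univ.filter (fun r : V => r ≠ 0)) => h r
  rw [← Finset.mul_sum, parseval] at h2
  nlinarith [score_le_sum E D, sq_nonneg (ones E - 4)]

lemma score_le_of_odd (E : V → ZMod 2) (D : V → ZMod 2 → ZMod 2) (hE : ¬ (2 : ℤ) ∣ ones E) :
    score E D ≤ 37 := by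
  have h : ∀ r : V, 4 * |W E r| ≤ W E r ^ 2 + 3 := by
    intro r
    have h1 : ¬ (2 : ℤ) ∣ |W E r| := by
      rw [dvd_abs]
      exact fun h => hE ((dvd_iff_dvd_of_dvd_sub (W_parity E r)).mp h)
    rw [← sq_abs]
    generalize |W E r| = w at h1
    -- An odd integer is not strictly between `1` and `3`, so `(w - 1) * (w - 3) ≥ 0`.
    rcases (by omega : w ≤ 1 ∨ 3 ≤ w) with h2 | h2 <;> nlinarith
  have h2 := Finset.sum_le_sum fun r (_ : r ∈ Finset.univ.filter (fun r : V => r ≠ 0)) => h r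
  rw [← Finset.mul_sum, Finset.sum_add_distrib, parseval, Finset.sum_const, card_masks] at h2
  norm_num at h2
  -- As `ones E` is odd, `(ones E - 4)² ≥ 1`.
  have h3 : 1 ≤ (ones E - 4) ^ 2 := by
    rcases (by omega : ones E - 4 ≤ -1 ∨ 1 ≤ ones E - 4) with h4 | h4 <;> nlinarith
  nlinarith [score_le_sum E D]

lemma score_le_max (E : V → ZMod 2) (D : V → ZMod 2 → ZMod 2) : score E D ≤ 37 := by
  by_cases h : (2 : ℤ) ∣ ones E
  · exact (score_le_of_even E D h).trans (by norm_num)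
  · exact score_le_of_odd E D h

/-- The majority encoding. -/
def maj (x : V) : ZMod 2 :=
  if (x 0 = 1 ∧ x 1 = 1) ∨ (x 0 = 1 ∧ x 2 = 1) ∨ (x 1 = 1 ∧ x 2 = 1) then 1 else 0

lemma ones_maj : ones maj = 4 := by decide

/-- The indicator of `{0, e₀, e₁}`. -/
def optE (x : V) : ZMod 2 := if x 2 = 0 ∧ x 0 * x 1 = 0 then 1 else 0

/-- The best decoding for `optE`: since `W optE r = 1 + (-1)^(r 0) + (-1)^(r 1)` is negative
exactly when `r 0 = r 1 = 1`, the message is flipped unless that holds. -/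
def optD (r : V) (c : ZMod 2) : ZMod 2 := 1 + c + r 0 * r 1

lemma score_opt : score optE optD = 37 := by decide +kernel

lemma cast_score (E : V → ZMod 2) (D : V → ZMod 2 → ZMod 2) :
    ∑ x : V, ∑ r ∈ Finset.univ.filter (fun r : V => r ≠ 0),
      (if D r (E x) = ∑ k, r k * x k then (1 : ℝ) else 0) = (score E D : ℝ) := by
  simp only [score, Int.cast_sum, Int.cast_ite, Int.cast_one, Int.cast_zero]

end GRAC

/-- (Observation 1) For the `(3, R(3))` GRAC where `R(3)` is the set of all 7 nonzero
vectors of `Fin 3 → ZMod 2`: with majority encoding `E_maj` (outputting `1` iff at least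
two of the three input bits are `1`), every decoding `D` achieves success probability at
most `36/56`; the maximal classical success probability over all encoding/decoding pairs
is `37/56`; and `36/56 < 37/56`.  Hence majority encoding (in particular with identity
decoding) is not optimal. -/
theorem majority_encoding_not_optimal :
    (∀ D : (Fin 3 → ZMod 2) → ZMod 2 → ZMod 2,
      (1 / ((2 : ℝ) ^ 3 * 7)) *
        ∑ x : Fin 3 → ZMod 2, ∑ r ∈ Finset.univ.filter (fun r : Fin 3 → ZMod 2 => r ≠ 0),
          (if D r (if (x 0 = 1 ∧ x 1 = 1) ∨ (x 0 = 1 ∧ x 2 = 1) ∨ (x 1 = 1 ∧ x 2 = 1)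
                    then (1 : ZMod 2) else 0) = ∑ k, r k * x k
            then (1 : ℝ) else 0)
      ≤ 36 / 56) ∧
    IsGreatest {s : ℝ | ∃ (E : (Fin 3 → ZMod 2) → ZMod 2)
        (D : (Fin 3 → ZMod 2) → ZMod 2 → ZMod 2),
        s = (1 / ((2 : ℝ) ^ 3 * 7)) *
          ∑ x : Fin 3 → ZMod 2, ∑ r ∈ Finset.univ.filter (fun r : Fin 3 → ZMod 2 => r ≠ 0),
            (if D r (E x) = ∑ k, r k * x k then (1 : ℝ) else 0)} (37 / 56) ∧
    (36 / 56 : ℝ) < 37 / 56 := by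
  refine ⟨fun D => ?_, ⟨⟨GRAC.optE, GRAC.optD, ?_⟩, ?_⟩, by norm_num⟩
  · have h : (GRAC.score GRAC.maj D : ℝ) ≤ 36 := by
      exact_mod_cast GRAC.score_le_of_even GRAC.maj D (by rw [GRAC.ones_maj]; norm_num)
    rw [← GRAC.cast_score] at h
    unfold GRAC.maj at h
    linarith
  · rw [GRAC.cast_score, GRAC.score_opt]
    norm_num
  · rintro s ⟨E, D, rfl⟩
    have h : (GRAC.score E D : ℝ) ≤ 37 := by exact_mod_cast GRAC.score_le_max E D
    rw [GRAC.cast_score]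
    linarith
end

section
/- For every subset S of the nonzero vectors of (Fin 3 → ZMod 2) with |S| = 2, the maximal classical success probability of the (3,S) GRAC equals 3/4. -/
/-!
Write `S = {a, b}`. Distinct nonzero vectors over `ZMod 2` are linearly independent, so
`x ↦ (a ⬝ x, b ⬝ x)` takes each of its four values on exactly two of the eight inputs
(`card_fiber`). For a given input, at most one of the two questions is answered correctly unless
`(a ⬝ x, b ⬝ x)` is one of the pairs `(D a m, D b m)`, `m = 0, 1`; there are at most two such
pairs, covering at most four inputs. Hence at most `8 + 2 + 2 = 12` of the `16` pairs `(x, r)` are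
won. Sending `a ⬝ x` and answering `0` to the question `b` wins exactly `12`.
-/

set_option synthInstance.maxHeartbeats 400000 in
set_option synthInstance.maxSize 2000 in
/-- Two distinct nonzero parities take each joint value on exactly `2 = 2 ^ (3 - 2)` inputs. -/
lemma card_fiber : ∀ a b : Fin 3 → ZMod 2, a ≠ 0 → b ≠ 0 → a ≠ b → ∀ u v : ZMod 2,
    (Finset.univ.filter fun x : Fin 3 → ZMod 2 =>
      ∑ k, a k * x k = u ∧ ∑ k, b k * x k = v).card = 2 := by
  decide +kernel

lemma sum_fiber {a b : Fin 3 → ZMod 2} (ha : a ≠ 0) (hb : b ≠ 0) (hab : a ≠ b) (u v : ZMod 2) :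
    ∑ x : Fin 3 → ZMod 2,
      (if ∑ k, a k * x k = u ∧ ∑ k, b k * x k = v then (1 : ℝ) else 0) = 2 := by
  rw [Finset.sum_boole, card_fiber a b ha hb hab u v]
  norm_num

lemma zmod_two_cases : ∀ m : ZMod 2, m = 0 ∨ m = 1 := by decide

/-- For every set `S` of 2 nonzero vectors of `Fin 3 → ZMod 2`, the maximal classical
success probability of the `(3,S)` GRAC equals `3 / 4`. -/
theorem grac3_classical_card2 (S : Finset (Fin 3 → ZMod 2))
    (hS0 : ∀ r ∈ S, r ≠ 0) (hcard : S.card = 2) :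
    IsGreatest {s : ℝ | ∃ (E : (Fin 3 → ZMod 2) → ZMod 2)
        (D : (Fin 3 → ZMod 2) → ZMod 2 → ZMod 2),
        s = (1 / ((2 : ℝ) ^ 3 * (S.card : ℝ))) *
          ∑ x : Fin 3 → ZMod 2, ∑ r ∈ S,
            (if D r (E x) = ∑ k, r k * x k then (1 : ℝ) else 0)} (3 / 4) := by
  obtain ⟨a, b, hab, rfl⟩ := Finset.card_eq_two.mp hcard
  have ha : a ≠ 0 := hS0 a (by simp)
  have hb : b ≠ 0 := hS0 b (by simp)
  have hfib := sum_fiber ha hb hab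
  have hone : ∑ _x : Fin 3 → ZMod 2, (1 : ℝ) = 8 := by simp
  rw [hcard]
  constructor
  · refine ⟨fun x => ∑ k, a k * x k, fun r m => if r = a then m else 0, ?_⟩
    -- The answer to `a` is always right; the one to `b` is right on the fibers over `(0, 0)`
    -- and `(1, 0)`.
    have key : ∀ x : Fin 3 → ZMod 2,
        (∑ r ∈ {a, b}, if (if r = a then ∑ k, a k * x k else 0) = ∑ k, r k * x k
          then (1 : ℝ) else 0) =
        1 + (if ∑ k, a k * x k = 0 ∧ ∑ k, b k * x k = 0 then (1 : ℝ) else 0)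
          + (if ∑ k, a k * x k = 1 ∧ ∑ k, b k * x k = 0 then (1 : ℝ) else 0) := by
      intro x
      rw [Finset.sum_pair hab, if_pos rfl, if_pos rfl, if_neg hab.symm]
      generalize ∑ k, a k * x k = p
      generalize ∑ k, b k * x k = q
      rcases zmod_two_cases p with rfl | rfl <;> simp [eq_comm]
    simp only [key, Finset.sum_add_distrib, hfib, hone]
    norm_num
  · rintro s ⟨E, D, rfl⟩
    have key : ∀ x : Fin 3 → ZMod 2,
        (∑ r ∈ {a, b}, if D r (E x) = ∑ k, r k * x k then (1 : ℝ) else 0) ≤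
        1 + (if ∑ k, a k * x k = D a 0 ∧ ∑ k, b k * x k = D b 0 then (1 : ℝ) else 0)
          + (if ∑ k, a k * x k = D a 1 ∧ ∑ k, b k * x k = D b 1 then (1 : ℝ) else 0) := by
      intro x
      rw [Finset.sum_pair hab]
      generalize ∑ k, a k * x k = p
      generalize ∑ k, b k * x k = q
      rcases zmod_two_cases (E x) with h | h <;> rw [h] <;> split_ifs <;>
        first | (norm_num; done) | simp_all
    have hsum := Finset.sum_le_sum fun x (_ : x ∈ Finset.univ) => key x
    rw [Finset.sum_add_distrib, Finset.sum_add_distrib, hfib, hfib, hone] at hsum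
    rw [one_div_mul_eq_div, div_le_iff₀ (by norm_num)]
    refine hsum.trans ?_
    norm_num
end

section
/- For every subset S of the nonzero vectors of (Fin 3 → ZMod 2) with |S| = 5, the maximal classical success probability of the (3,S) GRAC equals 7/10. -/
/-!
Write `W r = ∑ x, (-1) ^ (E x + r · x)` for the Walsh transform of the encoding. For `r ≠ 0` a
constant decoder answers 4 of the 8 inputs correctly, and the decoders `m ↦ m + c` answer
`4 ± W r / 2` of them, so a protocol is correct on at most `20 + (∑ r ∈ S, |W r|) / 2` of the 40
pairs `(x, r)`, and `7 / 10` amounts to the bound `∑ r ∈ S, |W r| ≤ 16` together with a case of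
equality.

The bound follows from Parseval, `∑ r, W r ^ 2 = 64`, and the fact that the even numbers `W r` all
agree modulo 4. If they are multiples of 4, then `|W r| ≤ W r ^ 2 / 4`, so the sum is at most
`16`. If they are all `2` modulo 4, then `(|W r| - 2) (|W r| - 6) ≥ 0`, so the sum over five
vectors is at most `(64 + 60) / 8 < 16`.

For equality, the two nonzero vectors outside `S` are both orthogonal to some `l ≠ 0`, so `S`
contains the four vectors of the affine plane `l · r = 1`. A suitable quadratic form whose polar
form is `l · (x × y)` has Walsh transform `±4` on that plane.
-/

/-- The sign character `a ↦ (-1) ^ a` of `ZMod 2`. -/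
def sgn (a : ZMod 2) : ℤ := if a = 0 then 1 else -1

lemma sgn_mul_self : ∀ a, sgn a * sgn a = 1 := by decide

/-- The Walsh transform of `E` at `r`. -/
def walsh (E : (Fin 3 → ZMod 2) → ZMod 2) (r : Fin 3 → ZMod 2) : ℤ :=
  ∑ x : Fin 3 → ZMod 2, sgn (E x) * sgn (∑ k, r k * x k)

lemma sgn_orthogonality : ∀ x y : Fin 3 → ZMod 2,
    ∑ r : Fin 3 → ZMod 2, sgn (∑ k, r k * x k) * sgn (∑ k, r k * y k)
      = if x = y then 8 else 0 := by decide +kernel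

lemma sum_sgn_eq_zero : ∀ r : Fin 3 → ZMod 2, r ≠ 0 →
    ∑ x : Fin 3 → ZMod 2, sgn (∑ k, r k * x k) = 0 := by decide +kernel

lemma walsh_parseval (E : (Fin 3 → ZMod 2) → ZMod 2) : ∑ r, walsh E r ^ 2 = 64 := by
  have h1 : ∀ r, walsh E r ^ 2 = ∑ x, ∑ y, (sgn (E x) * sgn (E y)) *
      (sgn (∑ k, r k * x k) * sgn (∑ k, r k * y k)) := by
    intro r
    rw [pow_two, walsh, Finset.sum_mul_sum]
    refine Finset.sum_congr rfl fun x _ => Finset.sum_congr rfl fun y _ => by ring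
  simp_rw [h1]
  rw [Finset.sum_comm]
  have h2 : ∀ x : Fin 3 → ZMod 2, ∑ r : Fin 3 → ZMod 2, ∑ y, (sgn (E x) * sgn (E y)) *
      (sgn (∑ k, r k * x k) * sgn (∑ k, r k * y k)) = 8 := by
    intro x
    rw [Finset.sum_comm]
    simp_rw [← Finset.mul_sum, sgn_orthogonality]
    simp [sgn_mul_self]
  simp_rw [h2]
  simp

/-- Flipping an even number of terms changes a sum of signs by a multiple of 4;
for `r ≠ 0` the character `x ↦ (-1) ^ (r · x)` takes the value `-1` four times. -/
lemma walsh_modEq (E : (Fin 3 → ZMod 2) → ZMod 2) (r : Fin 3 → ZMod 2) :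
    (4 : ℤ) ∣ walsh E r - walsh E 0 := by
  have key : ∀ a b : ZMod 2, (4 : ℤ) ∣ sgn a * sgn b - sgn a - (sgn b - 1) := by decide
  have hs : ∀ r : Fin 3 → ZMod 2, (4 : ℤ) ∣ ∑ x : Fin 3 → ZMod 2, (sgn (∑ k, r k * x k) - 1) := by
    decide +kernel
  have h0 : walsh E 0 = ∑ x, sgn (E x) := by simp [walsh, sgn]
  have h : walsh E r - walsh E 0 =
      ∑ x, (sgn (E x) * sgn (∑ k, r k * x k) - sgn (E x) - (sgn (∑ k, r k * x k) - 1))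
      + ∑ x : Fin 3 → ZMod 2, (sgn (∑ k, r k * x k) - 1) := by
    rw [h0, walsh, ← Finset.sum_add_distrib, ← Finset.sum_sub_distrib]
    refine Finset.sum_congr rfl fun x _ => by ring
  rw [h]
  exact dvd_add (Finset.dvd_sum fun x _ => key _ _) (hs r)

lemma walsh_zero_even (E : (Fin 3 → ZMod 2) → ZMod 2) : (2 : ℤ) ∣ walsh E 0 := by
  have key : ∀ a : ZMod 2, (2 : ℤ) ∣ sgn a - 1 := by decide
  have h : walsh E 0 = ∑ x, (sgn (E x) - 1) + 8 := by
    simp [walsh, sgn]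
  rw [h]
  exact dvd_add (Finset.dvd_sum fun x _ => key _) (by norm_num)

lemma sum_abs_walsh_le (E : (Fin 3 → ZMod 2) → ZMod 2) (S : Finset (Fin 3 → ZMod 2))
    (hcard : S.card = 5) : ∑ r ∈ S, |walsh E r| ≤ 16 := by
  have hP : ∑ r ∈ S, walsh E r ^ 2 ≤ 64 := by
    rw [← walsh_parseval E]
    exact Finset.sum_le_sum_of_subset_of_nonneg (Finset.subset_univ S) fun r _ _ => sq_nonneg _
  have he := walsh_zero_even E
  by_cases h4 : (4 : ℤ) ∣ walsh E 0
  · have h : ∀ r ∈ S, 4 * |walsh E r| ≤ walsh E r ^ 2 := by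
      intro r _
      have hm := walsh_modEq E r
      rw [← sq_abs]
      rcases (abs_nonneg (walsh E r)).eq_or_lt with h | h
      · simp [← h]
      · have : 4 ≤ |walsh E r| := Int.le_of_dvd h ((dvd_abs _ _).2 (by omega))
        nlinarith
    have := Finset.sum_le_sum h
    rw [← Finset.mul_sum] at this
    linarith
  · have h : ∀ r ∈ S, 8 * |walsh E r| ≤ walsh E r ^ 2 + 12 := by
      intro r _
      have hm := walsh_modEq E r
      rw [← sq_abs]
      have : |walsh E r| ≤ 2 ∨ 6 ≤ |walsh E r| := by
        rcases abs_cases (walsh E r) with h | h <;> omega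
      rcases this with h | h <;> nlinarith
    have := Finset.sum_le_sum h
    rw [← Finset.mul_sum, Finset.sum_add_distrib] at this
    simp only [Finset.sum_const, hcard] at this
    norm_num at this
    linarith

/-- Bound for a single nonzero `r`: the decoder `g` is constant, with count 4, or of the form
`m ↦ m + c`, with count `4 ± walsh E r / 2`. -/
lemma two_mul_count_le (E : (Fin 3 → ZMod 2) → ZMod 2) (r : Fin 3 → ZMod 2) (hr : r ≠ 0)
    (g : ZMod 2 → ZMod 2) :
    2 * ∑ x : Fin 3 → ZMod 2, (if g (E x) = ∑ k, r k * x k then (1 : ℤ) else 0)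
      ≤ 8 + |walsh E r| := by
  have hind : ∀ a b : ZMod 2, 2 * (if a = b then (1 : ℤ) else 0) = 1 + sgn a * sgn b := by decide
  have hg : ∀ g : ZMod 2 → ZMod 2, ∃ α β : ℤ, (∀ m, sgn (g m) = α + β * sgn m) ∧
      (β = 0 ∨ α = 0 ∧ (β = 1 ∨ β = -1)) := by
    intro g
    have h01 : ∀ a : ZMod 2, sgn a = 1 ∨ sgn a = -1 := by decide
    have hall : ∀ p : ZMod 2 → Prop, p 0 → p 1 → ∀ m, p m := by
      intro p h0 h1 m
      fin_cases m
      · exact h0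
      · exact h1
    have s0 : sgn 0 = 1 := by decide
    have s1 : sgn 1 = -1 := by decide
    rcases h01 (g 0) with h0 | h0 <;> rcases h01 (g 1) with h1 | h1
    · exact ⟨1, 0, hall _ (by simp [h0]) (by simp [h1]), by simp⟩
    · exact ⟨0, 1, hall _ (by simp [h0, s0]) (by simp [h1, s1]), by simp⟩
    · exact ⟨0, -1, hall _ (by simp [h0, s0]) (by simp [h1, s1]), by simp⟩
    · exact ⟨-1, 0, hall _ (by simp [h0]) (by simp [h1]), by simp⟩
  obtain ⟨α, β, h, hβ⟩ := hg g
  have hsum : 2 * ∑ x : Fin 3 → ZMod 2, (if g (E x) = ∑ k, r k * x k then (1 : ℤ) else 0)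
      = 8 + α * ∑ x : Fin 3 → ZMod 2, sgn (∑ k, r k * x k) + β * walsh E r := by
    have h8 : (8 : ℤ) = ∑ _x : Fin 3 → ZMod 2, 1 := by simp
    rw [h8, walsh, Finset.mul_sum, Finset.mul_sum, Finset.mul_sum, ← Finset.sum_add_distrib,
      ← Finset.sum_add_distrib]
    refine Finset.sum_congr rfl fun x _ => ?_
    rw [hind, h]
    ring
  rw [hsum, sum_sgn_eq_zero r hr]
  have h1 := le_abs_self (walsh E r)
  have h2 := neg_le_abs (walsh E r)
  have h3 := abs_nonneg (walsh E r)
  rcases hβ with rfl | ⟨-, rfl | rfl⟩ <;> linarith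

/-- The encoding is a quadratic form with polar form `l · (x × y)`, whose radical is spanned by
`l`; the linear part `w` is chosen so that the form plus `r · x` vanishes at `l` exactly when
`l · r = 1`, and then the Walsh coefficient at `r` is `±4`. -/
lemma exists_encoding : ∀ l : Fin 3 → ZMod 2, l ≠ 0 → ∃ w : Fin 3 → ZMod 2,
    ∀ r : Fin 3 → ZMod 2, ∑ k, l k * r k = 1 → ∃ c : ZMod 2,
      ∑ x : Fin 3 → ZMod 2, (if (l 0 * (x 1 * x 2) + l 1 * (x 0 * x 2) + l 2 * (x 0 * x 1)
        + ∑ k, w k * x k) + c = ∑ k, r k * x k then (1 : ℕ) else 0) = 6 := by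
  decide +kernel

lemma count_zero : ∀ r : Fin 3 → ZMod 2, r ≠ 0 →
    ∑ x : Fin 3 → ZMod 2, (if 0 = ∑ k, r k * x k then (1 : ℕ) else 0) = 4 := by
  decide +kernel

lemma exists_protocol (l : Fin 3 → ZMod 2) (hl : l ≠ 0) :
    ∃ (E : (Fin 3 → ZMod 2) → ZMod 2) (D : (Fin 3 → ZMod 2) → ZMod 2 → ZMod 2),
      ∀ r, r ≠ 0 → ∑ x : Fin 3 → ZMod 2, (if D r (E x) = ∑ k, r k * x k then (1 : ℕ) else 0)
        = if ∑ k, l k * r k = 1 then 6 else 4 := by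
  obtain ⟨w, hw⟩ := exists_encoding l hl
  choose! c hc using hw
  refine ⟨fun x => l 0 * (x 1 * x 2) + l 1 * (x 0 * x 2) + l 2 * (x 0 * x 1) + ∑ k, w k * x k,
    fun r m => if ∑ k, l k * r k = 1 then m + c r else 0, fun r hr => ?_⟩
  by_cases h : ∑ k, l k * r k = 1
  · simp only [if_pos h]
    exact hc r h
  · simp only [if_neg h]
    exact count_zero r hr

lemma exists_plane_subset (S : Finset (Fin 3 → ZMod 2))
    (hS0 : ∀ r ∈ S, r ≠ 0) (hcard : S.card = 5) :
    ∃ l : Fin 3 → ZMod 2, l ≠ 0 ∧ ∀ r, ∑ k, l k * r k = 1 → r ∈ S := by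
  have horth : ∀ a b : Fin 3 → ZMod 2, ∃ l : Fin 3 → ZMod 2, l ≠ 0 ∧
      ∑ k, l k * a k = 0 ∧ ∑ k, l k * b k = 0 := by decide +kernel
  have h0 : (0 : Fin 3 → ZMod 2) ∈ Sᶜ := by
    rw [Finset.mem_compl]
    exact fun h => hS0 0 h rfl
  have hc : (Sᶜ.erase 0).card = 2 := by
    rw [Finset.card_erase_of_mem h0, Finset.card_compl, hcard]
    simp
  obtain ⟨a, b, -, hab⟩ := Finset.card_eq_two.1 hc
  obtain ⟨l, hl, ha, hb⟩ := horth a b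
  refine ⟨l, hl, fun r hr => ?_⟩
  by_contra hrS
  have hr0 : r ≠ 0 := by
    rintro rfl
    simp at hr
  have : r ∈ Sᶜ.erase 0 := by simp [hr0, hrS]
  rw [hab, Finset.mem_insert, Finset.mem_singleton] at this
  rcases this with rfl | rfl
  · rw [ha] at hr; exact zero_ne_one hr
  · rw [hb] at hr; exact zero_ne_one hr

/-- For every set `S` of 5 nonzero vectors of `Fin 3 → ZMod 2`, the maximal classical
success probability of the `(3,S)` GRAC equals `7 / 10`. -/
theorem grac3_classical_card5 (S : Finset (Fin 3 → ZMod 2))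
    (hS0 : ∀ r ∈ S, r ≠ 0) (hcard : S.card = 5) :
    IsGreatest {s : ℝ | ∃ (E : (Fin 3 → ZMod 2) → ZMod 2)
        (D : (Fin 3 → ZMod 2) → ZMod 2 → ZMod 2),
        s = (1 / ((2 : ℝ) ^ 3 * (S.card : ℝ))) *
          ∑ x : Fin 3 → ZMod 2, ∑ r ∈ S,
            (if D r (E x) = ∑ k, r k * x k then (1 : ℝ) else 0)} (7 / 10) := by
  constructor
  · obtain ⟨l, hl, hlS⟩ := exists_plane_subset S hS0 hcard
    obtain ⟨E, D, hED⟩ := exists_protocol l hl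
    refine ⟨E, D, ?_⟩
    have hplane : ∀ l : Fin 3 → ZMod 2, l ≠ 0 →
        (Finset.univ.filter fun r : Fin 3 → ZMod 2 => ∑ k, l k * r k = 1).card = 4 := by
      decide +kernel
    have hfilter : (S.filter fun r => ∑ k, l k * r k = 1) =
        Finset.univ.filter fun r : Fin 3 → ZMod 2 => ∑ k, l k * r k = 1 := by
      ext r
      simp only [Finset.mem_filter, Finset.mem_univ, true_and]
      exact ⟨fun h => h.2, fun h => ⟨hlS r h, h⟩⟩
    have hcount : ∑ x : Fin 3 → ZMod 2, ∑ r ∈ S,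
        (if D r (E x) = ∑ k, r k * x k then (1 : ℕ) else 0) = 28 := by
      rw [Finset.sum_comm, Finset.sum_congr rfl fun r hr => hED r (hS0 r hr)]
      have hsplit : ∀ r ∈ S, (if ∑ k, l k * r k = 1 then 6 else 4) =
          4 + 2 * (if ∑ k, l k * r k = 1 then 1 else 0) := by
        intro r _
        split_ifs <;> rfl
      rw [Finset.sum_congr rfl hsplit, Finset.sum_add_distrib, ← Finset.mul_sum,
        ← Finset.card_filter, hfilter, hplane l hl, Finset.sum_const, hcard]
      rfl
    have hreal : ∑ x : Fin 3 → ZMod 2, ∑ r ∈ S,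
        (if D r (E x) = ∑ k, r k * x k then (1 : ℝ) else 0) = 28 := by
      exact_mod_cast congrArg (Nat.cast : ℕ → ℝ) hcount
    rw [hreal, hcard]
    norm_num
  · rintro s ⟨E, D, rfl⟩
    have hcount : ∑ x : Fin 3 → ZMod 2, ∑ r ∈ S,
        (if D r (E x) = ∑ k, r k * x k then (1 : ℤ) else 0) ≤ 28 := by
      rw [Finset.sum_comm]
      have h := Finset.sum_le_sum fun r hr => two_mul_count_le E r (hS0 r hr) (D r)
      rw [← Finset.mul_sum, Finset.sum_add_distrib, Finset.sum_const, hcard] at h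
      have := sum_abs_walsh_le E S hcard
      rw [nsmul_eq_mul] at h
      push_cast at h
      linarith
    have hreal : ∑ x : Fin 3 → ZMod 2, ∑ r ∈ S,
        (if D r (E x) = ∑ k, r k * x k then (1 : ℝ) else 0) ≤ 28 := by
      exact_mod_cast (Int.cast_le (R := ℝ)).2 hcount
    calc _ ≤ (1 / ((2 : ℝ) ^ 3 * (S.card : ℝ))) * 28 :=
          mul_le_mul_of_nonneg_left hreal (by positivity)
      _ = 7 / 10 := by rw [hcard]; norm_num
end

section
/- For every subset S of the nonzero vectors of (Fin 3 → ZMod 2) with |S| = 6, the maximal classical success probability of the (3,S) GRAC equals 2/3. -/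
/-!
Write `χ e = (-1)^e` and let `W r = ∑ x, χ (E x) * χ (r ⬝ x)` be the Walsh transform of the
encoding `E`. For `r ≠ 0` the best decoding agrees with `f_r` on at most `4 + |W r| / 2` of the
eight strings, since `f_r` is balanced and a function of the bit `E x` is affine in `χ (E x)`
(`grac_agree_le`). So the upper bound `32 / 48` amounts to `∑ r ∈ S, |W r| ≤ 16`.

Parseval gives `∑ r, W r ^ 2 = 64`, and all `W r` are even and congruent to each other modulo `4`.
If they are multiples of `4`, then `4 * |W r| ≤ W r ^ 2` and the sum is at most `64 / 4`. If they
are all `2` modulo `4`, then `8 * |W r| ≤ W r ^ 2 + 12`, while the two frequencies outside `S`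
contribute at least `4` each to the Parseval sum, so `8 * ∑ r ∈ S, |W r| ≤ 56 + 72`.

Equality is attained by sending `f_a` for some `a ∈ S`, flipped at `x = 0`: the received bit is
right for `a` on seven strings, and its negation is right for any other `r ∈ S` on five.
-/

/-- The sign `(-1)^e` of a bit `e`, as an integer. -/
def gracSign (e : ZMod 2) : ℤ := if e = 0 then 1 else -1

/-- The Walsh transform of the encoding `E`, without normalization. -/
def gracWalsh (E : (Fin 3 → ZMod 2) → ZMod 2) (r : Fin 3 → ZMod 2) : ℤ :=
  ∑ x : Fin 3 → ZMod 2, gracSign (E x) * gracSign (∑ k, r k * x k)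

/-- Orthogonality of the characters of `Fin 3 → ZMod 2`. -/
lemma gracSign_orthogonal : ∀ x y : Fin 3 → ZMod 2,
    ∑ r : Fin 3 → ZMod 2, gracSign (∑ k, r k * x k) * gracSign (∑ k, r k * y k) =
      if x = y then 8 else 0 := by
  decide +kernel

lemma gracSign_balanced : ∀ r : Fin 3 → ZMod 2, r ≠ 0 →
    ∑ x : Fin 3 → ZMod 2, gracSign (∑ k, r k * x k) = 0 := by
  decide +kernel

lemma gracSign_sq : ∀ e : ZMod 2, gracSign e * gracSign e = 1 := by decide

/-- Parseval's identity. -/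
lemma gracWalsh_parseval (E : (Fin 3 → ZMod 2) → ZMod 2) :
    ∑ r, gracWalsh E r ^ 2 = 64 := by
  have h1 : ∀ r, gracWalsh E r ^ 2 = ∑ x, ∑ y, gracSign (E x) * gracSign (E y) *
      (gracSign (∑ k, r k * x k) * gracSign (∑ k, r k * y k)) := by
    intro r
    rw [gracWalsh, sq, Finset.sum_mul_sum]
    refine Finset.sum_congr rfl fun x _ => Finset.sum_congr rfl fun y _ => by ring
  simp_rw [h1]
  rw [Finset.sum_comm]
  have h2 : ∀ x : Fin 3 → ZMod 2, ∑ r : Fin 3 → ZMod 2, ∑ y, gracSign (E x) * gracSign (E y) *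
      (gracSign (∑ k, r k * x k) * gracSign (∑ k, r k * y k)) = 8 := by
    intro x
    rw [Finset.sum_comm]
    simp_rw [← Finset.mul_sum, gracSign_orthogonal]
    simp [gracSign_sq]
  simp_rw [h2]
  simp

/-- Both factors of each summand of `W r` are `1` modulo `2`, so `W r` is, modulo `4`,
`∑ x, (χ (E x) + χ (r ⬝ x) - 1)`; the part depending on `r` is a multiple of `8`. -/
lemma gracWalsh_mod (E : (Fin 3 → ZMod 2) → ZMod 2) :
    (∀ r, 4 ∣ gracWalsh E r) ∨ (∀ r, 4 ∣ gracWalsh E r - 2) := by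
  have hpt : ∀ e f : ZMod 2, (4 : ℤ) ∣ gracSign e * gracSign f - (gracSign e + gracSign f - 1) := by
    decide
  have hbal : ∀ r : Fin 3 → ZMod 2,
      (4 : ℤ) ∣ ∑ x : Fin 3 → ZMod 2, gracSign (∑ k, r k * x k) := by
    decide +kernel
  have hkey : ∀ r, (4 : ℤ) ∣ gracWalsh E r - ∑ x, gracSign (E x) := by
    intro r
    have h := Finset.dvd_sum (s := Finset.univ)
      fun (x : Fin 3 → ZMod 2) _ => hpt (E x) (∑ k, r k * x k)
    simp only [Finset.sum_sub_distrib, Finset.sum_add_distrib] at h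
    have h8 : ∑ _x : Fin 3 → ZMod 2, (1 : ℤ) = 8 := by simp
    have h' := hbal r
    rw [h8] at h
    unfold gracWalsh
    omega
  have heven : (2 : ℤ) ∣ ∑ x, gracSign (E x) := by
    have hodd : ∀ e : ZMod 2, (2 : ℤ) ∣ gracSign e - 1 := by decide
    have h := Finset.dvd_sum (s := Finset.univ) fun (x : Fin 3 → ZMod 2) _ => hodd (E x)
    have h8 : ∑ _x : Fin 3 → ZMod 2, (1 : ℤ) = 8 := by simp
    rw [Finset.sum_sub_distrib, h8] at h
    omega
  by_cases h : (4 : ℤ) ∣ ∑ x, gracSign (E x)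
  · left
    intro r
    have := hkey r
    omega
  · right
    intro r
    have := hkey r
    omega

lemma gracWalsh_sum_abs_le (E : (Fin 3 → ZMod 2) → ZMod 2) (S : Finset (Fin 3 → ZMod 2))
    (hcard : S.card = 6) : ∑ r ∈ S, |gracWalsh E r| ≤ 16 := by
  have hp := gracWalsh_parseval E
  rw [← Finset.sum_add_sum_compl S] at hp
  rcases gracWalsh_mod E with h | h
  · have h1 : ∑ r ∈ S, 4 * |gracWalsh E r| ≤ ∑ r ∈ S, gracWalsh E r ^ 2 := by
      refine Finset.sum_le_sum fun r _ => ?_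
      obtain ⟨c, hc⟩ := h r
      have hc' : |c| ≤ c ^ 2 := by
        rw [← sq_abs]
        exact Int.le_self_sq _
      rw [hc, abs_mul]
      norm_num
      nlinarith
    have h2 : 0 ≤ ∑ r ∈ Sᶜ, gracWalsh E r ^ 2 := Finset.sum_nonneg fun r _ => sq_nonneg _
    rw [← Finset.mul_sum] at h1
    omega
  · have h1 : ∑ r ∈ S, 8 * |gracWalsh E r| ≤ ∑ r ∈ S, (gracWalsh E r ^ 2 + 12) := by
      refine Finset.sum_le_sum fun r _ => ?_
      have hr := h r
      rw [← sq_abs]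
      -- No value lies strictly between `2` and `6`, so `(|W r| - 2) * (|W r| - 6) ≥ 0`.
      have : |gracWalsh E r| ≤ 2 ∨ 6 ≤ |gracWalsh E r| := by
        rcases abs_cases (gracWalsh E r) with h | h <;> omega
      have : 2 ≤ |gracWalsh E r| := by
        rcases abs_cases (gracWalsh E r) with h | h <;> omega
      rcases ‹_ ∨ _› with h | h <;> nlinarith
    have h2 : ∑ _r ∈ Sᶜ, (4 : ℤ) ≤ ∑ r ∈ Sᶜ, gracWalsh E r ^ 2 := by
      refine Finset.sum_le_sum fun r _ => ?_
      have hr := h r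
      rw [← sq_abs]
      have : 2 ≤ |gracWalsh E r| := by
        rcases abs_cases (gracWalsh E r) with h | h <;> omega
      nlinarith
    have hc : Sᶜ.card = 2 := by
      rw [Finset.card_compl, hcard]
      simp
    rw [← Finset.mul_sum, Finset.sum_add_distrib] at h1
    simp [hcard] at h1
    simp [hc] at h2
    omega

/-- For `r ≠ 0`, a decoding `d` of the bit `E x` agrees with `f_r` at most `4 + |W r| / 2` times. -/
lemma grac_agree_le (E : (Fin 3 → ZMod 2) → ZMod 2) (d : ZMod 2 → ZMod 2)
    (r : Fin 3 → ZMod 2) (hr : r ≠ 0) :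
    2 * ∑ x : Fin 3 → ZMod 2, (if d (E x) = ∑ k, r k * x k then (1 : ℤ) else 0) ≤
      8 + |gracWalsh E r| := by
  -- `2 χ(d e)` is the affine function `(χ(d 0) + χ(d 1)) + (χ(d 0) - χ(d 1)) χ(e)` of `χ(e)`.
  have hpt : ∀ a b e f : ZMod 2,
      4 * (if (if e = 0 then a else b) = f then (1 : ℤ) else 0) =
        2 + (gracSign a + gracSign b) * gracSign f +
          (gracSign a - gracSign b) * (gracSign e * gracSign f) := by
    decide
  have hd : ∀ e, d e = if e = 0 then d 0 else d 1 := by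
    intro e
    fin_cases e <;> rfl
  have h4 : 4 * ∑ x : Fin 3 → ZMod 2, (if d (E x) = ∑ k, r k * x k then (1 : ℤ) else 0) =
      16 + (gracSign (d 0) - gracSign (d 1)) * gracWalsh E r := by
    rw [Finset.mul_sum]
    have : ∀ x : Fin 3 → ZMod 2, 4 * (if d (E x) = ∑ k, r k * x k then (1 : ℤ) else 0) =
        2 + (gracSign (d 0) + gracSign (d 1)) * gracSign (∑ k, r k * x k) +
          (gracSign (d 0) - gracSign (d 1)) * (gracSign (E x) * gracSign (∑ k, r k * x k)) := by
      intro x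
      rw [hd (E x)]
      exact hpt _ _ _ _
    rw [Finset.sum_congr rfl fun x _ => this x, Finset.sum_add_distrib, Finset.sum_add_distrib,
      ← Finset.mul_sum, ← Finset.mul_sum, gracSign_balanced r hr, gracWalsh]
    simp
  have hb : ∀ a b : ZMod 2, |gracSign a - gracSign b| ≤ 2 := by decide
  have h5 := le_abs_self ((gracSign (d 0) - gracSign (d 1)) * gracWalsh E r)
  rw [abs_mul] at h5
  have h6 := mul_le_mul_of_nonneg_right (hb (d 0) (d 1)) (abs_nonneg (gracWalsh E r))
  linarith

lemma grac_total_le (S : Finset (Fin 3 → ZMod 2)) (hS0 : ∀ r ∈ S, r ≠ 0) (hcard : S.card = 6)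
    (E : (Fin 3 → ZMod 2) → ZMod 2) (D : (Fin 3 → ZMod 2) → ZMod 2 → ZMod 2) :
    ∑ x : Fin 3 → ZMod 2, ∑ r ∈ S, (if D r (E x) = ∑ k, r k * x k then (1 : ℤ) else 0) ≤ 32 := by
  rw [Finset.sum_comm]
  have h := Finset.sum_le_sum fun r hr => grac_agree_le E (D r) r (hS0 r hr)
  rw [← Finset.mul_sum, Finset.sum_add_distrib] at h
  have h' := gracWalsh_sum_abs_le E S hcard
  simp only [Finset.sum_const, hcard, nsmul_eq_mul] at h
  push_cast at h
  linarith

/-- Agreement counts of the optimal protocol: send `f_a`, flipped at `0`; decode by the identity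
for `r = a` and by negation for `r ≠ a`. -/
lemma grac_optimal_agree : ∀ a r : Fin 3 → ZMod 2,
    ∑ x : Fin 3 → ZMod 2,
      (if ((∑ k, a k * x k) + if x = 0 then 1 else 0) + (if r = a then 0 else 1) =
        ∑ k, r k * x k then (1 : ℤ) else 0) = 5 + if r = a then 2 else 0 := by
  decide +kernel

/-- For every set `S` of 6 nonzero vectors of `Fin 3 → ZMod 2`, the maximal classical
success probability of the `(3,S)` GRAC equals `2 / 3`. -/
theorem grac3_classical_card6 (S : Finset (Fin 3 → ZMod 2))
    (hS0 : ∀ r ∈ S, r ≠ 0) (hcard : S.card = 6) :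
    IsGreatest {s : ℝ | ∃ (E : (Fin 3 → ZMod 2) → ZMod 2)
        (D : (Fin 3 → ZMod 2) → ZMod 2 → ZMod 2),
        s = (1 / ((2 : ℝ) ^ 3 * (S.card : ℝ))) *
          ∑ x : Fin 3 → ZMod 2, ∑ r ∈ S,
            (if D r (E x) = ∑ k, r k * x k then (1 : ℝ) else 0)} (2 / 3) := by
  constructor
  · obtain ⟨a, ha⟩ : S.Nonempty := Finset.card_pos.mp (by omega)
    refine ⟨fun x => (∑ k, a k * x k) + if x = 0 then 1 else 0,
      fun r e => e + if r = a then 0 else 1, ?_⟩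
    have h : ∑ x : Fin 3 → ZMod 2, ∑ r ∈ S,
        (if ((∑ k, a k * x k) + if x = 0 then 1 else 0) + (if r = a then 0 else 1) =
          ∑ k, r k * x k then (1 : ℤ) else 0) = 32 := by
      rw [Finset.sum_comm]
      simp_rw [grac_optimal_agree]
      rw [Finset.sum_add_distrib, Finset.sum_ite_eq_of_mem' S a _ ha]
      simp [hcard]
    have hR := congrArg (Int.cast : ℤ → ℝ) h
    push_cast at hR
    rw [hR, hcard]
    norm_num
  · rintro s ⟨E, D, rfl⟩
    have h := grac_total_le S hS0 hcard E D
    have hR := (Int.cast_le (R := ℝ)).mpr h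
    push_cast at hR
    rw [hcard]
    push_cast
    linarith
end
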